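/- Let n be a positive integer, let σ and σ' be decorated permutations of order n, and let a < b < c < a + n be integers. Suppose (a b) is an allowed boundary transposition for σ, (a c) is an allowed boundary transposition for σ', and σ ∘ t_{a,b} = σ' ∘ t_{a,c}. Then ρ := σ ∘ t_{b,c} is a decorated permutation of order n, (b c) is an allowed boundary transposition for ρ with ρ ∘ t_{b,c} = σ, and (a b) is an allowed boundary transposition for ρ with ρ ∘ t_{a,b} = σ'. (Thus σ and σ' have a common parent in the poset of decorated permutations, forming a quadrilateral.) -/

import Mathlib

/-- A decorated permutation of order `n`: a bijection `σ : ℤ → ℤ` with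
`σ (i + n) = σ i + n` and `i ≤ σ i ≤ i + n` for all `i`. -/
def IsDecoratedPerm (n : ℤ) (σ : ℤ → ℤ) : Prop :=
  Function.Bijective σ ∧ (∀ i : ℤ, σ (i + n) = σ i + n) ∧ ∀ i : ℤ, i ≤ σ i ∧ σ i ≤ i + n

/-- The affine transposition `t_{a,b}`: swaps `a + m*n` and `b + m*n` for every `m : ℤ`
and fixes all integers not congruent to `a` or `b` modulo `n`. -/
def affT (n a b : ℤ) (i : ℤ) : ℤ :=
  if (i - a) % n = 0 then i + (b - a)
  else if (i - b) % n = 0 then i - (b - a)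
  else i

/-- `(a b)` is an allowed boundary transposition for `σ`: `a < b < a + n`,
`b ≤ σ a < σ b ≤ a + n`, and there is no `q` with `a < q < b` and `σ a < σ q < σ b`. -/
def AllowedBT (n : ℤ) (σ : ℤ → ℤ) (a b : ℤ) : Prop :=
  a < b ∧ b < a + n ∧ b ≤ σ a ∧ σ a < σ b ∧ σ b ≤ a + n ∧
    ¬ ∃ q : ℤ, a < q ∧ q < b ∧ σ a < σ q ∧ σ q < σ b

/-!
Put `ρ = σ ∘ t_{b,c}`. The braid relation `t_{b,c} ∘ t_{a,b} = t_{a,b} ∘ t_{a,c}` turns the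
hypothesis `σ ∘ t_{a,b} = σ' ∘ t_{a,c}` into `σ' = ρ ∘ t_{a,b}`, so `σ` and `σ'` take at `a, b, c`
the values `ρ a, ρ c, ρ b` and `ρ b, ρ a, ρ c`, and both agree with `ρ` elsewhere in `[a, c]`.
Since `ρ a < ρ c` and the position `b` does not obstruct `(a c)` for `σ'`, we get
`ρ a < ρ b < ρ c`, and the remaining bounds are read off from those for `σ` and `σ'`.
-/

section

variable {n a b c : ℤ} {σ ρ : ℤ → ℤ}

theorem map_add_mul_of_map_add {f : ℤ → ℤ} (hf : ∀ i, f (i + n) = f i + n) (i t : ℤ) :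
    f (i + n * t) = f i + n * t := by
  let F : AddConstMap ℤ ℤ n n := ⟨f, hf⟩
  have map_add_zsmul : f (i + t • n) = f i + t • n := AddConstMapClass.map_add_zsmul F i t
  simpa only [smul_eq_mul, mul_comm t n] using map_add_zsmul

theorem not_modEq_of_lt_of_lt_add (hab : a < b) (hba : b < a + n) : ¬ a ≡ b [ZMOD n] := by
  intro h
  have : n ≤ b - a := Int.le_of_dvd (sub_pos.2 hab) (Int.modEq_iff_dvd.1 h)
  linarith

theorem affT_apply_left (n a b : ℤ) : affT n a b a = b := by
  simp [affT]

theorem affT_apply_right (hab : ¬ a ≡ b [ZMOD n]) : affT n a b b = a := by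
  rw [Int.modEq_iff_dvd, Int.dvd_iff_emod_eq_zero] at hab
  simp [affT, hab]

theorem affT_apply_of_not_modEq {i : ℤ} (ha : ¬ a ≡ i [ZMOD n]) (hb : ¬ b ≡ i [ZMOD n]) :
    affT n a b i = i := by
  rw [Int.modEq_iff_dvd, Int.dvd_iff_emod_eq_zero] at ha hb
  simp only [affT, if_neg ha, if_neg hb]

theorem affT_apply_of_gt {i : ℤ} (hab : a < b) (hbi : b < i) (hia : i < a + n) :
    affT n a b i = i :=
  affT_apply_of_not_modEq (not_modEq_of_lt_of_lt_add (hab.trans hbi) hia)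
    (not_modEq_of_lt_of_lt_add hbi (by linarith))

theorem affT_apply_of_lt {i : ℤ} (hia : i < a) (hab : a < b) (hbi : b < i + n) :
    affT n a b i = i :=
  affT_apply_of_not_modEq (fun h ↦ not_modEq_of_lt_of_lt_add hia (by linarith) h.symm)
    (fun h ↦ not_modEq_of_lt_of_lt_add (hia.trans hab) hbi h.symm)

theorem affT_add_period (n a b i : ℤ) : affT n a b (i + n) = affT n a b i + n := by
  simp only [affT, add_sub_right_comm i n, Int.add_emod_right]
  split_ifs <;> ring

theorem affT_add_mul (n a b i t : ℤ) : affT n a b (i + n * t) = affT n a b i + n * t :=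
  map_add_mul_of_map_add (affT_add_period n a b) i t

theorem affT_involutive (hab : ¬ a ≡ b [ZMOD n]) : Function.Involutive (affT n a b) := by
  intro i
  by_cases ha : a ≡ i [ZMOD n]
  · obtain ⟨t, rfl⟩ := Int.modEq_iff_add_fac.1 ha
    simp only [affT_add_mul, affT_apply_left, affT_apply_right hab]
  by_cases hb : b ≡ i [ZMOD n]
  · obtain ⟨t, rfl⟩ := Int.modEq_iff_add_fac.1 hb
    simp only [affT_add_mul, affT_apply_left, affT_apply_right hab]
  · simp only [affT_apply_of_not_modEq ha hb]

theorem comp_affT_comp_affT (σ : ℤ → ℤ) (hab : ¬ a ≡ b [ZMOD n]) :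
    (σ ∘ affT n a b) ∘ affT n a b = σ := by
  rw [Function.comp_assoc, (affT_involutive hab).comp_self, Function.comp_id]

theorem affT_comp_affT_braid (hab : ¬ a ≡ b [ZMOD n]) (hac : ¬ a ≡ c [ZMOD n])
    (hbc : ¬ b ≡ c [ZMOD n]) :
    affT n b c ∘ affT n a b = affT n a b ∘ affT n a c := by
  have fix_a : affT n b c a = a :=
    affT_apply_of_not_modEq (fun h ↦ hab h.symm) (fun h ↦ hac h.symm)
  have fix_b : affT n a c b = b := affT_apply_of_not_modEq hab (fun h ↦ hbc h.symm)
  have fix_c : affT n a b c = c := affT_apply_of_not_modEq hac hbc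
  funext i
  simp only [Function.comp_apply]
  by_cases ha : a ≡ i [ZMOD n]
  · obtain ⟨t, rfl⟩ := Int.modEq_iff_add_fac.1 ha
    simp only [affT_add_mul, affT_apply_left, fix_c]
  by_cases hb : b ≡ i [ZMOD n]
  · obtain ⟨t, rfl⟩ := Int.modEq_iff_add_fac.1 hb
    simp only [affT_add_mul, affT_apply_right hab, fix_a, fix_b]
  by_cases hc : c ≡ i [ZMOD n]
  · obtain ⟨t, rfl⟩ := Int.modEq_iff_add_fac.1 hc
    simp only [affT_add_mul, affT_apply_left, affT_apply_right hac, affT_apply_right hbc, fix_c]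
  · simp only [affT_apply_of_not_modEq ha hb, affT_apply_of_not_modEq hb hc,
      affT_apply_of_not_modEq ha hc]

theorem IsDecoratedPerm.comp_affT (hσ : IsDecoratedPerm n σ) (hab : ¬ a ≡ b [ZMOD n])
    (hb : σ b ∈ Set.Icc a (a + n)) (ha : σ a ∈ Set.Icc b (b + n)) :
    IsDecoratedPerm n (σ ∘ affT n a b) := by
  obtain ⟨bijective, map_add, bounds⟩ := hσ
  refine ⟨bijective.comp (affT_involutive hab).bijective, fun i ↦ ?_, fun i ↦ ?_⟩
  · simp only [Function.comp_apply, affT_add_period, map_add]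
  simp only [Function.comp_apply]
  by_cases hai : a ≡ i [ZMOD n]
  · obtain ⟨t, rfl⟩ := Int.modEq_iff_add_fac.1 hai
    rw [affT_add_mul, affT_apply_left, map_add_mul_of_map_add map_add]
    constructor <;> linarith [hb.1, hb.2]
  by_cases hbi : b ≡ i [ZMOD n]
  · obtain ⟨t, rfl⟩ := Int.modEq_iff_add_fac.1 hbi
    rw [affT_add_mul, affT_apply_right hab, map_add_mul_of_map_add map_add]
    constructor <;> linarith [ha.1, ha.2]
  · simpa only [affT_apply_of_not_modEq hai hbi] using bounds i

namespace AllowedBT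

theorem not_modEq (h : AllowedBT n σ a b) : ¬ a ≡ b [ZMOD n] :=
  not_modEq_of_lt_of_lt_add h.1 h.2.1

theorem isDecoratedPerm_of_comp_affT (h : AllowedBT n ρ a b)
    (hσ : IsDecoratedPerm n (ρ ∘ affT n a b)) : IsDecoratedPerm n ρ := by
  have apply_a : (ρ ∘ affT n a b) a = ρ b := congrArg ρ (affT_apply_left n a b)
  have apply_b : (ρ ∘ affT n a b) b = ρ a := congrArg ρ (affT_apply_right h.not_modEq)
  have ⟨hab, _, hba, hlt, hbn, _⟩ := h
  rw [← comp_affT_comp_affT ρ h.not_modEq]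
  refine hσ.comp_affT h.not_modEq ?_ ?_
  · rw [apply_b]
    constructor <;> linarith
  · rw [apply_a]
    constructor <;> linarith

theorem right_of_comp_affT_left (hab : a < b) (hbc : b < c)
    (h : AllowedBT n (ρ ∘ affT n a b) a c) : AllowedBT n ρ b c := by
  obtain ⟨-, hca, hcb, hlt, hcn, hno⟩ := h
  have agree : ∀ q, b < q → q ≤ c → (ρ ∘ affT n a b) q = ρ q := fun q hbq hqc ↦
    congrArg ρ (affT_apply_of_gt hab hbq (hqc.trans_lt hca))
  have apply_a : (ρ ∘ affT n a b) a = ρ b := congrArg ρ (affT_apply_left n a b)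
  rw [apply_a] at hcb
  rw [apply_a, agree c hbc le_rfl] at hlt
  rw [agree c hbc le_rfl] at hcn
  refine ⟨hbc, by linarith, hcb, hlt, by linarith, ?_⟩
  rintro ⟨q, hbq, hqc, hq⟩
  refine hno ⟨q, hab.trans hbq, hqc, ?_⟩
  rwa [apply_a, agree q hbq hqc.le, agree c hbc le_rfl]

theorem left_of_comp_affT_right (hbc : b < c) (hca : c < a + n) (hρab : ρ a < ρ b)
    (hρbc : ρ b < ρ c) (h : AllowedBT n (ρ ∘ affT n b c) a b) : AllowedBT n ρ a b := by
  obtain ⟨hab, hba, hb, -, hbn, hno⟩ := h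
  have agree : ∀ q, a ≤ q → q < b → (ρ ∘ affT n b c) q = ρ q := fun q haq hqb ↦
    congrArg ρ (affT_apply_of_lt hqb hbc (by linarith))
  have apply_b : (ρ ∘ affT n b c) b = ρ c := congrArg ρ (affT_apply_left n b c)
  rw [agree a le_rfl hab] at hb
  rw [apply_b] at hbn
  refine ⟨hab, hba, hb, hρab, by linarith, ?_⟩
  rintro ⟨q, haq, hqb, hq⟩
  refine hno ⟨q, haq, hqb, ?_⟩
  rw [agree a le_rfl hab, agree q haq.le hqb, apply_b]
  exact ⟨hq.1, hq.2.trans hρbc⟩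

theorem apply_lt_apply_of_comp_affT (hne : ρ a ≠ ρ b) (hbc : b < c)
    (hσ : AllowedBT n (ρ ∘ affT n b c) a b) (hσ' : AllowedBT n (ρ ∘ affT n a b) a c) :
    ρ a < ρ b := by
  have apply_a : (ρ ∘ affT n b c) a = ρ a :=
    congrArg ρ (affT_apply_of_lt hσ.1 hbc hσ'.2.1)
  have apply_b : (ρ ∘ affT n b c) b = ρ c := congrArg ρ (affT_apply_left n b c)
  have apply_a' : (ρ ∘ affT n a b) a = ρ b := congrArg ρ (affT_apply_left n a b)
  have apply_b' : (ρ ∘ affT n a b) b = ρ a := congrArg ρ (affT_apply_right hσ.not_modEq)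
  have apply_c' : (ρ ∘ affT n a b) c = ρ c :=
    congrArg ρ (affT_apply_of_gt hσ.1 hbc hσ'.2.1)
  obtain ⟨hab, -, -, hac, -, -⟩ := hσ
  obtain ⟨-, -, -, -, -, hno⟩ := hσ'
  rw [apply_a, apply_b] at hac
  by_contra hle
  have hba : ρ b < ρ a := lt_of_le_of_ne (not_lt.1 hle) hne.symm
  refine hno ⟨b, hab, hbc, ?_⟩
  rw [apply_a', apply_b', apply_c']
  exact ⟨hba, hac⟩

end AllowedBT

end

/-- Case `(a b)` vs `(a c)` with `a < b < c < a + n`: `σ` and `σ'`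
have a common parent `ρ = σ ∘ t_{b,c}`, forming a quadrilateral in the poset. -/
theorem common_parent_ab_ac (n : ℤ) (hn : 0 < n) (σ σ' : ℤ → ℤ)
    (hσ : IsDecoratedPerm n σ) (hσ' : IsDecoratedPerm n σ')
    (a b c : ℤ) (hab : a < b) (hbc : b < c) (hca : c < a + n)
    (h1 : AllowedBT n σ a b) (h2 : AllowedBT n σ' a c)
    (heq : σ ∘ affT n a b = σ' ∘ affT n a c) :
    IsDecoratedPerm n (σ ∘ affT n b c) ∧
    AllowedBT n (σ ∘ affT n b c) b c ∧ (σ ∘ affT n b c) ∘ affT n b c = σ ∧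
    AllowedBT n (σ ∘ affT n b c) a b ∧ (σ ∘ affT n b c) ∘ affT n a b = σ' := by
  have not_bc : ¬ b ≡ c [ZMOD n] := not_modEq_of_lt_of_lt_add hbc (by linarith)
  have child_bc : (σ ∘ affT n b c) ∘ affT n b c = σ := comp_affT_comp_affT σ not_bc
  have child_ab : (σ ∘ affT n b c) ∘ affT n a b = σ' := by
    rw [Function.comp_assoc, affT_comp_affT_braid h1.not_modEq h2.not_modEq not_bc,
      ← Function.comp_assoc, heq, comp_affT_comp_affT σ' h2.not_modEq]
  generalize σ ∘ affT n b c = ρ at child_bc child_ab ⊢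
  subst child_bc child_ab
  have allowed_bc : AllowedBT n ρ b c := h2.right_of_comp_affT_left hab hbc
  have hρ : IsDecoratedPerm n ρ := allowed_bc.isDecoratedPerm_of_comp_affT hσ
  have hρab : ρ a < ρ b := h1.apply_lt_apply_of_comp_affT (hρ.1.injective.ne hab.ne) hbc h2
  have hρbc : ρ b < ρ c := allowed_bc.2.2.2.1
  exact ⟨hρ, allowed_bc, rfl, h1.left_of_comp_affT_right hbc hca hρab hρbc, rfl⟩
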